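/- Assume α ∈ [1/2, 1) and that W additionally satisfies W(x,y) ≥ c_*((x/y)^α + (y/x)^α) for some c_* > 0 and all x,y > 0. Then there exist ε_* > 0 and a constant c_α > 0 such that for every ε ∈ (0, ε_*], every normalised self-similar profile φ_ε for K_ε, every x ∈ (0,1] and every τ > 0: Φ[φ_ε](x) − Φ[φ_ε](x+τ) ≥ c_α ε x^{−α} if τ ≥ x, and Φ[φ_ε](x) − Φ[φ_ε](x+τ) ≥ c_α ε x^{−1−α} τ if τ ≤ x. -/

import Mathlib

open MeasureTheory Real Set Filter

noncomputable def weight (a b x : ℝ) : ℝ := if x ≤ 1 then x ^ a else x ^ b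

noncomputable def Xnorm (a b : ℝ) (g : ℝ → ℝ) : ℝ :=
  ∫ x in Ioi (0:ℝ), |g x| * weight a b x

def MemX (a b : ℝ) (g : ℝ → ℝ) : Prop :=
  IntegrableOn (fun x => g x * weight a b x) (Ioi 0)

noncomputable def Kern (ε : ℝ) (W : ℝ → ℝ → ℝ) (x y : ℝ) : ℝ := 2 + ε * W x y

def GoodW (α : ℝ) (W : ℝ → ℝ → ℝ) : Prop :=
  ContinuousOn (fun p : ℝ × ℝ => W p.1 p.2) (Ioi 0 ×ˢ Ioi 0) ∧
  (∀ x y : ℝ, 0 < x → 0 < y → W x y = W y x) ∧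
  (∀ l x y : ℝ, 0 < l → 0 < x → 0 < y → W (l * x) (l * y) = W x y) ∧
  (∀ x y : ℝ, 0 < x → 0 < y → 0 ≤ W x y ∧ W x y ≤ (x / y) ^ α + (y / x) ^ α)

def IsProfile (K : ℝ → ℝ → ℝ) (φ : ℝ → ℝ) : Prop :=
  LocallyIntegrableOn φ (Ioi 0) ∧
  (∀ᵐ x ∂(volume.restrict (Ioi (0:ℝ))), 0 ≤ φ x) ∧
  IntegrableOn (fun x => x * φ x) (Ioi 0) ∧
  (∀ᵐ x ∂(volume.restrict (Ioi (0:ℝ))),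
    x ^ 2 * φ x = ∫ y in Ioo 0 x, ∫ z in Ioi (x - y), y * K y z * φ y * φ z)

def IsNormalised (φ : ℝ → ℝ) : Prop := ∫ x in Ioi (0:ℝ), x * φ x = 1

noncomputable def betaW (W : ℝ → ℝ → ℝ) (φ : ℝ → ℝ) (x : ℝ) : ℝ :=
  ∫ z in Ioi (0:ℝ), W x z * φ z

noncomputable def Phi (ε : ℝ) (W : ℝ → ℝ → ℝ) (φ : ℝ → ℝ) (x : ℝ) : ℝ :=
  ε * ∫ y in Ioi x, betaW W φ y / y * exp (-y)

/-
Testing the profile equation against `g` gives, for `ν = φ(x) dx` with moments `M_p = ∫ x ^ p dν`,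
  `∫ g x * x ^ 2 dν = ∬ y * K(y, z) * (∫ x in y..y + z, g x) dν dν`.
Since `K y z ≥ κ * (z / y) ^ α`, finiteness of `M_p` with `p ≤ 1` forces finiteness of `M_(p - α)`;
starting from `M_1 = 1`, all moments of exponent at most `1` are finite. The choice `g x = x ^ (-2)`
and `K ≥ 2` give, after symmetrising in `y` and `z`, `M_0 ≥ M_0 ^ 2`, that is `M_0 ≤ 1`, and hence
`M_(1 - α) ≤ 1`. The choice `g x = x ^ (-α)` gives `M_(2 - α) ≤ C * M_(1 - α) ≤ C`, and Lyapunov's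
inequality `1 = M_1 ^ 2 ≤ M_α * M_(2 - α)` bounds `M_α` from below. Consequently
`betaW W φ y ≥ c * M_α * y ^ (-α)`, and the claim follows by integrating over `[x, x + min τ x]`.
-/

open scoped ENNReal

section Powers

variable {α x y z q : ℝ}

/-- The model weight `(x / y) ^ α + (y / x) ^ α` with which the perturbation `W` is compared. -/
noncomputable def ratioPowSum (α x y : ℝ) : ℝ := (x / y) ^ α + (y / x) ^ α

lemma ratioPowSum_comm (α x y : ℝ) : ratioPowSum α x y = ratioPowSum α y x :=
  add_comm _ _

lemma ratioPowSum_nonneg (hx : 0 ≤ x) (hy : 0 ≤ y) : 0 ≤ ratioPowSum α x y := by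
  unfold ratioPowSum; positivity

lemma ratioPowSum_eq (hx : 0 < x) (hy : 0 < y) :
    ratioPowSum α x y = x ^ α * y ^ (-α) + x ^ (-α) * y ^ α := by
  rw [ratioPowSum, div_rpow hx.le hy.le, div_rpow hy.le hx.le, rpow_neg hx.le, rpow_neg hy.le]
  ring

lemma ratioPowSum_le_div_mul (hα : 0 ≤ α) (hα' : α ≤ 1) (hx : 0 < x) (hy : 0 < y) (hyz : y ≤ z) :
    ratioPowSum α x z ≤ z / y * ratioPowSum α x y := by
  have hz : 0 < z := hy.trans_le hyz
  have hratio : 1 ≤ z / y := (one_le_div hy).2 hyz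
  have hdecr : (x / z) ^ α ≤ z / y * (x / y) ^ α := calc
    (x / z) ^ α ≤ (x / y) ^ α := by gcongr
    _ ≤ z / y * (x / y) ^ α := le_mul_of_one_le_left (by positivity) hratio
  have hincr : (z / x) ^ α ≤ z / y * (y / x) ^ α := calc
    (z / x) ^ α = (z / y) ^ α * (y / x) ^ α := by
      rw [← mul_rpow (by positivity) (by positivity), div_mul_div_cancel₀ hy.ne']
    _ ≤ z / y * (y / x) ^ α := by
      gcongr
      exact rpow_le_self_of_one_le hratio hα'
  rw [ratioPowSum, ratioPowSum, mul_add]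
  exact add_le_add hdecr hincr

lemma intervalIntegrable_rpow_of_pos (q : ℝ) (hx : 0 < x) (hy : 0 < y) :
    IntervalIntegrable (fun t : ℝ => t ^ q) volume x y :=
  intervalIntegral.intervalIntegrable_rpow (Or.inr (notMem_uIcc_of_lt hx hy))

lemma lintegral_Ioo_ofReal_rpow (q : ℝ) (hy : 0 < y) (hz : 0 < z) :
    ∫⁻ x in Ioo y (y + z), ENNReal.ofReal (x ^ q) =
      ENNReal.ofReal (∫ x in y..y + z, x ^ q) := by
  have hyz : y ≤ y + z := by linarith
  rw [intervalIntegral.integral_of_le hyz, integral_Ioc_eq_integral_Ioo,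
    ofReal_integral_eq_lintegral_ofReal]
  · exact (intervalIntegrable_iff_integrableOn_Ioo_of_le hyz).1
      (intervalIntegrable_rpow_of_pos q hy (by linarith))
  · filter_upwards [ae_restrict_mem measurableSet_Ioo] with x hx
    exact rpow_nonneg (hy.trans hx.1).le q

lemma integral_rpow_nonneg (q : ℝ) (hy : 0 < y) (hz : 0 < z) : 0 ≤ ∫ x in y..y + z, x ^ q :=
  intervalIntegral.integral_nonneg (by linarith) fun x hx => rpow_nonneg (hy.le.trans hx.1) q

lemma integral_rpow_le_mul_rpow (hq : q ≤ 0) (hy : 0 < y) (hz : 0 < z) :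
    ∫ x in y..y + z, x ^ q ≤ z * y ^ q := by
  have hyz : y ≤ y + z := by linarith
  calc ∫ x in y..y + z, x ^ q ≤ ∫ _ in y..y + z, y ^ q :=
        intervalIntegral.integral_mono_on hyz
          (intervalIntegrable_rpow_of_pos q hy (by linarith)) intervalIntegrable_const
          fun x hx => rpow_le_rpow_of_nonpos hy hx.1 hq
    _ = z * y ^ q := by simp

lemma mul_rpow_two_mul_le_integral_rpow (hq : q ≤ 0) (hy : 0 < y) (hyz : y ≤ z) :
    y * (2 * y) ^ q ≤ ∫ x in y..y + z, x ^ q := by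
  have hz : 0 < y + z := by linarith
  calc y * (2 * y) ^ q = ∫ _ in y..2 * y, (2 * y) ^ q := by
        rw [intervalIntegral.integral_const, smul_eq_mul]; ring
    _ ≤ ∫ x in y..2 * y, x ^ q :=
        intervalIntegral.integral_mono_on (by linarith) intervalIntegrable_const
          (intervalIntegrable_rpow_of_pos q hy (by linarith))
          fun x hx => rpow_le_rpow_of_nonpos (hy.trans_le hx.1) hx.2 hq
    _ ≤ ∫ x in y..y + z, x ^ q := by
        refine intervalIntegral.integral_mono_interval le_rfl (by linarith) (by linarith) ?_
          (intervalIntegrable_rpow_of_pos q hy hz)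
        filter_upwards [ae_restrict_mem measurableSet_Ioc] with x hx
        exact rpow_nonneg (hy.trans hx.1).le q

lemma integral_rpow_neg_le_rpow_one_sub (hα : 0 ≤ α) (hα' : α < 1) (hy : 0 < y) (hz : 0 < z) :
    ∫ x in y..y + z, x ^ (-α) ≤ z ^ (1 - α) / (1 - α) := by
  have hsub : 0 < 1 - α := by linarith
  have hadd : (y + z) ^ (1 - α) ≤ y ^ (1 - α) + z ^ (1 - α) :=
    rpow_add_le_add_rpow hy.le hz.le hsub.le (by linarith)
  rw [integral_rpow (Or.inl (by linarith)), neg_add_eq_sub]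
  gcongr
  linarith

lemma integral_rpow_neg_two (hy : 0 < y) (hz : 0 < z) :
    ∫ x in y..y + z, x ^ (-2 : ℝ) = z / (y * (y + z)) := by
  rw [integral_rpow (Or.inr ⟨by norm_num, notMem_uIcc_of_lt hy (by linarith)⟩),
    show (-2 : ℝ) + 1 = -1 by norm_num, rpow_neg_one, rpow_neg_one]
  field_simp
  ring

end Powers

section Tonelli

variable {X Y : Type*} [MeasurableSpace X] [MeasurableSpace Y]
  {μ : Measure X} {ν : Measure Y} [SFinite μ] [SFinite ν]

lemma lintegral_mul_setLIntegral_swap {T : Set (X × Y)} (hT : MeasurableSet T)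
    {g : X → ℝ≥0∞} {k : Y → ℝ≥0∞} (hg : Measurable g) (hk : Measurable k) :
    ∫⁻ x, g x * ∫⁻ y in {y | (x, y) ∈ T}, k y ∂ν ∂μ =
      ∫⁻ y, k y * ∫⁻ x in {x | (x, y) ∈ T}, g x ∂μ ∂ν := by
  set F : X × Y → ℝ≥0∞ := T.indicator fun p => g p.1 * k p.2
  have hF : Measurable F := by fun_prop (disch := exact hT)
  have hleft (x : X) : ∫⁻ y, F (x, y) ∂ν = g x * ∫⁻ y in {y | (x, y) ∈ T}, k y ∂ν :=
    (lintegral_indicator (measurable_prodMk_left hT) fun y => g x * k y).trans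
      (lintegral_const_mul _ hk)
  have hright (y : Y) : ∫⁻ x, F (x, y) ∂μ = k y * ∫⁻ x in {x | (x, y) ∈ T}, g x ∂μ :=
    (lintegral_indicator (measurable_prodMk_right hT) fun x => g x * k y).trans
      ((lintegral_mul_const _ hg).trans (mul_comm _ _))
  simp_rw [← hleft, ← hright]
  exact lintegral_lintegral_swap hF.aemeasurable

lemma setLIntegral_mul_measure_le_setLIntegral_prod {s : Set X} {t : Set Y}
    (hs : MeasurableSet s) (ht : MeasurableSet t) {h : X → ℝ≥0∞} (hh : Measurable h)
    {F : X × Y → ℝ≥0∞} (hF : ∀ x ∈ s, ∀ y ∈ t, h x ≤ F (x, y)) :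
    (∫⁻ x in s, h x ∂μ) * ν t ≤ ∫⁻ p in s ×ˢ t, F p ∂μ.prod ν := calc
  (∫⁻ x in s, h x ∂μ) * ν t = ∫⁻ p in s ×ˢ t, h p.1 * 1 ∂μ.prod ν := by
    rw [← Measure.prod_restrict, lintegral_prod_mul hh.aemeasurable aemeasurable_const,
      setLIntegral_one]
  _ ≤ ∫⁻ p in s ×ˢ t, F p ∂μ.prod ν :=
    setLIntegral_mono' (hs.prod ht) fun p hp => (mul_one (h p.1)).trans_le (hF _ hp.1 _ hp.2)

end Tonelli

section Moments

variable {ν : Measure ℝ} {p q r x : ℝ}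

/-- The moment `∫ x ^ p dν` of a size distribution `ν`, with values in `[0, ∞]`. It is only
meaningful for measures living on `(0, ∞)`, because of the junk values of `x ^ p` for `x ≤ 0`. -/
noncomputable def powerMoment (ν : Measure ℝ) (p : ℝ) : ℝ≥0∞ :=
  ∫⁻ x, ENNReal.ofReal (x ^ p) ∂ν

lemma powerMoment_zero (ν : Measure ℝ) : powerMoment ν 0 = ν univ := by
  simp [powerMoment]

lemma ae_pos_prod (hν : ∀ᵐ x ∂ν, 0 < x) :
    ∀ᵐ p ∂ν.prod ν, 0 < p.1 ∧ 0 < p.2 :=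
  (Measure.quasiMeasurePreserving_fst.ae hν).and (Measure.quasiMeasurePreserving_snd.ae hν)

lemma lintegral_prod_ofReal_rpow_mul [SFinite ν] (p q : ℝ) :
    ∫⁻ x, ENNReal.ofReal (x.1 ^ p) * ENNReal.ofReal (x.2 ^ q) ∂ν.prod ν =
      powerMoment ν p * powerMoment ν q :=
  lintegral_prod_mul (f := fun x => ENNReal.ofReal (x ^ p))
    (g := fun x => ENNReal.ofReal (x ^ q)) (by fun_prop) (by fun_prop)

lemma powerMoment_le_rpow_mul_rpow (hν : ∀ᵐ x ∂ν, 0 < x) {s t : ℝ} (hs : 0 ≤ s) (ht : 0 ≤ t)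
    (hst : s + t = 1) (p q : ℝ) :
    powerMoment ν (s * p + t * q) ≤ powerMoment ν p ^ s * powerMoment ν q ^ t := calc
  powerMoment ν (s * p + t * q)
      = ∫⁻ x, ENNReal.ofReal (x ^ p) ^ s * ENNReal.ofReal (x ^ q) ^ t ∂ν := by
    refine lintegral_congr_ae (hν.mono fun x hx => ?_)
    dsimp only
    rw [ENNReal.ofReal_rpow_of_pos (by positivity), ENNReal.ofReal_rpow_of_pos (by positivity),
      ← ENNReal.ofReal_mul (by positivity), ← rpow_mul hx.le, ← rpow_mul hx.le, ← rpow_add hx,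
      mul_comm p, mul_comm q]
  _ ≤ powerMoment ν p ^ s * powerMoment ν q ^ t :=
    ENNReal.lintegral_mul_norm_pow_le (by fun_prop) (by fun_prop) hs ht hst

lemma powerMoment_lt_top_of_mem_Icc (hν : ∀ᵐ x ∂ν, 0 < x) (hp : powerMoment ν p < ⊤)
    (hr : powerMoment ν r < ⊤) (hq : q ∈ Icc p r) : powerMoment ν q < ⊤ := by
  obtain ⟨s, t, hs, ht, hst, rfl⟩ := Icc_subset_segment hq
  exact (powerMoment_le_rpow_mul_rpow hν hs ht hst p r).trans_lt
    (ENNReal.mul_lt_top (ENNReal.rpow_lt_top_of_nonneg hs hp.ne)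
      (ENNReal.rpow_lt_top_of_nonneg ht hr.ne))

lemma powerMoment_lt_top_of_setLIntegral_Ioo (hν : ∀ᵐ x ∂ν, 0 < x)
    (h₁ : powerMoment ν 1 < ⊤) (hp : p ≤ 1) (hx : 0 < x)
    (h : ∫⁻ y in Ioo 0 x, ENNReal.ofReal (y ^ p) ∂ν < ⊤) : powerMoment ν p < ⊤ := by
  have hpointwise : ∀ y, 0 < y → ENNReal.ofReal (y ^ p) ≤
      (Ioo 0 x).indicator (fun y => ENNReal.ofReal (y ^ p)) y +
        ENNReal.ofReal (x ^ (p - 1)) * ENNReal.ofReal (y ^ (1 : ℝ)) := by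
    intro y hy
    rcases lt_or_ge y x with hyx | hxy
    · rw [indicator_of_mem (show y ∈ Ioo 0 x from ⟨hy, hyx⟩)]
      exact le_self_add
    · refine le_add_of_nonneg_of_le zero_le ?_
      rw [← ENNReal.ofReal_mul (by positivity)]
      refine ENNReal.ofReal_le_ofReal ?_
      calc y ^ p = y ^ (p - 1) * y ^ (1 : ℝ) := by rw [← rpow_add hy, sub_add_cancel]
        _ ≤ x ^ (p - 1) * y ^ (1 : ℝ) := by
          exact mul_le_mul_of_nonneg_right (rpow_le_rpow_of_nonpos hx hxy (by linarith))
            (by positivity)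
  calc powerMoment ν p
      ≤ ∫⁻ y, ((Ioo 0 x).indicator (fun y => ENNReal.ofReal (y ^ p)) y +
          ENNReal.ofReal (x ^ (p - 1)) * ENNReal.ofReal (y ^ (1 : ℝ))) ∂ν :=
        lintegral_mono_ae (hν.mono hpointwise)
    _ = (∫⁻ y in Ioo 0 x, ENNReal.ofReal (y ^ p) ∂ν) +
          ENNReal.ofReal (x ^ (p - 1)) * powerMoment ν 1 := by
        rw [lintegral_add_right _ (by fun_prop), lintegral_indicator measurableSet_Ioo,
          lintegral_const_mul _ (by fun_prop), powerMoment]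
    _ < ⊤ := ENNReal.add_lt_top.2 ⟨h, ENNReal.mul_lt_top ENNReal.ofReal_lt_top h₁⟩

lemma ne_zero_of_powerMoment_ne_zero (h : powerMoment ν p ≠ 0) : ν ≠ 0 := by
  rintro rfl
  exact h (lintegral_zero_measure _)

lemma exists_measure_Ioi_pos (hν : ∀ᵐ x ∂ν, 0 < x) (hν₀ : ν ≠ 0) :
    ∃ δ : ℝ, 0 < δ ∧ 0 < ν (Ioi δ) := by
  have hcover : ν (⋃ n : ℕ, Ioi (1 / ((n : ℝ) + 1))) ≠ 0 := fun hnull => by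
    have hfalse : ∀ᵐ _ ∂ν, False := by
      filter_upwards [hν, measure_eq_zero_iff_ae_notMem.1 hnull] with x hx hx'
      obtain ⟨n, hn⟩ := exists_nat_one_div_lt hx
      exact hx' (mem_iUnion.2 ⟨n, hn⟩)
    exact hν₀ (ae_eq_bot.1 (eventually_false_iff_eq_bot.1 hfalse))
  obtain ⟨n, hn⟩ := exists_measure_pos_of_not_measure_iUnion_null hcover
  exact ⟨1 / ((n : ℝ) + 1), by positivity, hn⟩

end Moments

section MassFlux

variable {K : ℝ → ℝ → ℝ} {ν : Measure ℝ}

/-- The flux at size `x` of the mass which the coagulation events of the size distribution `ν`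
move from below `x` to above `x`: particles of size `p.1 < x` merge with particles of size `p.2`
into particles of size `p.1 + p.2 > x`. -/
noncomputable def massFlux (K : ℝ → ℝ → ℝ) (ν : Measure ℝ) (x : ℝ) : ℝ≥0∞ :=
  ∫⁻ p in {p : ℝ × ℝ | x ∈ Ioo p.1 (p.1 + p.2)}, ENNReal.ofReal (p.1 * K p.1 p.2) ∂ν.prod ν

/-- The pairing `∫ g x * massFlux K ν x dx`, integrated over `x` first. -/
noncomputable def fluxPairing (K : ℝ → ℝ → ℝ) (ν : Measure ℝ) (g : ℝ → ℝ≥0∞) : ℝ≥0∞ :=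
  ∫⁻ p, ENNReal.ofReal (p.1 * K p.1 p.2) * (∫⁻ x in Ioo p.1 (p.1 + p.2), g x) ∂ν.prod ν

/-- The weak formulation of a normalised self-similar profile: the equation
`x ^ 2 φ(x) = massFlux K ν x` for the measure `ν = φ(x) dx`, tested against all nonnegative
measurable functions. -/
structure IsMeasureProfile (K : ℝ → ℝ → ℝ) (ν : Measure ℝ) : Prop where
  ae_pos : ∀ᵐ x ∂ν, 0 < x
  powerMoment_one : powerMoment ν 1 = 1
  weak : ∀ g : ℝ → ℝ≥0∞, Measurable g →
    ∫⁻ x, g x * ENNReal.ofReal (x ^ 2) ∂ν = fluxPairing K ν g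

lemma measurableSet_prod_mem_Ioo :
    MeasurableSet {p : ℝ × (ℝ × ℝ) | p.1 ∈ Ioo p.2.1 (p.2.1 + p.2.2)} :=
  (measurableSet_lt measurable_snd.fst measurable_fst).inter
    (measurableSet_lt measurable_fst (measurable_snd.fst.add measurable_snd.snd))

lemma measurable_massFlux [SFinite ν] (hK : Measurable (Function.uncurry K)) :
    Measurable (massFlux K ν) := by
  have hk : Measurable fun p : ℝ × (ℝ × ℝ) =>
      ENNReal.ofReal (p.2.1 * Function.uncurry K p.2) := by fun_prop
  convert (hk.indicator measurableSet_prod_mem_Ioo).lintegral_prod_right' (ν := ν.prod ν)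
    using 2 with x
  exact (lintegral_indicator (measurable_prodMk_left measurableSet_prod_mem_Ioo) _).symm

lemma lintegral_mul_massFlux [SFinite ν] (hK : Measurable (Function.uncurry K)) {g : ℝ → ℝ≥0∞}
    (hg : Measurable g) : ∫⁻ x, g x * massFlux K ν x = fluxPairing K ν g :=
  lintegral_mul_setLIntegral_swap
    (k := fun p : ℝ × ℝ => ENNReal.ofReal (p.1 * Function.uncurry K p))
    measurableSet_prod_mem_Ioo hg (by fun_prop)

lemma fluxPairing_rpow (hν : ∀ᵐ x ∂ν, 0 < x) (q : ℝ) :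
    fluxPairing K ν (fun x => ENNReal.ofReal (x ^ q)) =
      ∫⁻ p, ENNReal.ofReal (p.1 * K p.1 p.2 * ∫ x in p.1..p.1 + p.2, x ^ q) ∂ν.prod ν := by
  refine lintegral_congr_ae ((ae_pos_prod hν).mono fun p ⟨hy, hz⟩ => ?_)
  dsimp only
  rw [lintegral_Ioo_ofReal_rpow q hy hz, ← ENNReal.ofReal_mul' (integral_rpow_nonneg q hy hz)]

lemma IsMeasureProfile.powerMoment_eq_fluxPairing (hν : IsMeasureProfile K ν) (p : ℝ) :
    powerMoment ν p = fluxPairing K ν fun x => ENNReal.ofReal (x ^ (p - 2)) := by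
  rw [← hν.weak _ (by fun_prop)]
  refine lintegral_congr_ae (hν.ae_pos.mono fun x hx => ?_)
  dsimp only
  rw [← ENNReal.ofReal_mul (by positivity), ← rpow_natCast, ← rpow_add hx]
  norm_num

lemma IsMeasureProfile.powerMoment_eq_lintegral (hν : IsMeasureProfile K ν) (p : ℝ) :
    powerMoment ν p = ∫⁻ a, ENNReal.ofReal
      (a.1 * K a.1 a.2 * ∫ x in a.1..a.1 + a.2, x ^ (p - 2)) ∂ν.prod ν := by
  rw [hν.powerMoment_eq_fluxPairing, fluxPairing_rpow hν.ae_pos]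

end MassFlux

section MomentBounds

variable {K : ℝ → ℝ → ℝ} {ν : Measure ℝ} {α ε κ δ p y z : ℝ}

lemma rpow_sub_le_mul_integral_rpow (hκ : 0 ≤ κ) (hα : 0 ≤ α)
    (hK : ∀ y z, 0 < y → 0 < z → κ * (z / y) ^ α ≤ K y z) (hp : p ≤ 2)
    (hy : 0 < y) (hyδ : y < δ) (hδz : δ < z) :
    κ * δ ^ α * 2 ^ (p - 2) * y ^ (p - α) ≤ y * K y z * ∫ x in y..y + z, x ^ (p - 2) := by
  have hδ : 0 < δ := hy.trans hyδ
  have hz : 0 < z := hδ.trans hδz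
  calc κ * δ ^ α * 2 ^ (p - 2) * y ^ (p - α)
      = y * (κ * (δ / y) ^ α) * (y * (2 * y) ^ (p - 2)) := by
        rw [div_rpow hδ.le hy.le, mul_rpow two_pos.le hy.le, rpow_sub hy, rpow_sub hy, rpow_two]
        field_simp
    _ ≤ y * K y z * ∫ x in y..y + z, x ^ (p - 2) := by
        have hδK : κ * (δ / y) ^ α ≤ K y z := le_trans (by gcongr) (hK y z hy hz)
        have hrpow := mul_rpow_two_mul_le_integral_rpow (sub_nonpos.2 hp) hy (hyδ.trans hδz).le
        have : 0 ≤ K y z := le_trans (by positivity) hδK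
        gcongr

lemma IsMeasureProfile.powerMoment_sub_lt_top [SFinite ν] (hν : IsMeasureProfile K ν)
    (hκ : 0 < κ) (hα : 0 ≤ α) (hK : ∀ y z, 0 < y → 0 < z → κ * (z / y) ^ α ≤ K y z)
    (hp : p ≤ 1) (hfin : powerMoment ν p < ⊤) : powerMoment ν (p - α) < ⊤ := by
  obtain ⟨δ, hδ, hνδ⟩ := exists_measure_Ioi_pos hν.ae_pos
    (ne_zero_of_powerMoment_ne_zero (hν.powerMoment_one.trans_ne one_ne_zero))
  set C : ℝ := κ * δ ^ α * 2 ^ (p - 2)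
  have hCpos : 0 < C := by positivity
  have hle : ENNReal.ofReal C * (∫⁻ y in Ioo 0 δ, ENNReal.ofReal (y ^ (p - α)) ∂ν) * ν (Ioi δ) ≤
      powerMoment ν p := by
    rw [hν.powerMoment_eq_lintegral p, ← lintegral_const_mul _ (by fun_prop)]
    refine (setLIntegral_mul_measure_le_setLIntegral_prod measurableSet_Ioo measurableSet_Ioi
      (by fun_prop) fun y hy z hz => ?_).trans (setLIntegral_le_lintegral _ _)
    rw [← ENNReal.ofReal_mul hCpos.le]
    exact ENNReal.ofReal_le_ofReal
      (rpow_sub_le_mul_integral_rpow hκ.le hα hK (by linarith) hy.1 hy.2 hz)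
  refine powerMoment_lt_top_of_setLIntegral_Ioo hν.ae_pos
    (hν.powerMoment_one.trans_lt ENNReal.one_lt_top) (by linarith) hδ ?_
  have hfin' := ENNReal.lt_top_of_mul_ne_top_left (hle.trans_lt hfin).ne hνδ.ne'
  exact ENNReal.lt_top_of_mul_ne_top_right hfin'.ne (ENNReal.ofReal_pos.2 hCpos).ne'

lemma IsMeasureProfile.powerMoment_lt_top [SFinite ν] (hν : IsMeasureProfile K ν)
    (hκ : 0 < κ) (hα : 0 < α) (hK : ∀ y z, 0 < y → 0 < z → κ * (z / y) ^ α ≤ K y z)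
    (hp : p ≤ 1) : powerMoment ν p < ⊤ := by
  have hiter (n : ℕ) : powerMoment ν (1 - n * α) < ⊤ := by
    induction n with
    | zero => simp [hν.powerMoment_one]
    | succ n ih =>
      have hle : 1 - n * α ≤ 1 := sub_le_self _ (by positivity)
      convert hν.powerMoment_sub_lt_top hκ hα.le hK hle ih using 2
      push_cast; ring
  obtain ⟨n, hn⟩ := exists_nat_ge ((1 - p) / α)
  have hpn : 1 - n * α ≤ p := by linarith [(div_le_iff₀ hα).1 hn]
  exact powerMoment_lt_top_of_mem_Icc hν.ae_pos (hiter n)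
    (hν.powerMoment_one.trans_lt ENNReal.one_lt_top) ⟨hpn, hp⟩

lemma lintegral_prod_self_div_add [SFinite ν] (hν : ∀ᵐ x ∂ν, 0 < x) :
    ∫⁻ p, ENNReal.ofReal (2 * (p.2 / (p.1 + p.2))) ∂ν.prod ν = powerMoment ν 0 ^ 2 := by
  have hswap : ∫⁻ p, ENNReal.ofReal (p.1 / (p.1 + p.2)) ∂ν.prod ν =
      ∫⁻ p, ENNReal.ofReal (p.2 / (p.1 + p.2)) ∂ν.prod ν := by
    rw [← lintegral_prod_swap]
    simp only [Prod.fst_swap, Prod.snd_swap, add_comm]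
  calc ∫⁻ p, ENNReal.ofReal (2 * (p.2 / (p.1 + p.2))) ∂ν.prod ν
      = ∫⁻ p, ENNReal.ofReal (p.1 / (p.1 + p.2)) ∂ν.prod ν +
          ∫⁻ p, ENNReal.ofReal (p.2 / (p.1 + p.2)) ∂ν.prod ν := by
        rw [hswap, ← two_mul, ← lintegral_const_mul _ (by fun_prop)]
        simp_rw [ENNReal.ofReal_mul two_pos.le, ENNReal.ofReal_ofNat]
    _ = ∫⁻ _, 1 ∂ν.prod ν := by
        rw [← lintegral_add_left (by fun_prop)]
        refine lintegral_congr_ae ((ae_pos_prod hν).mono fun p ⟨hy, hz⟩ => ?_)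
        dsimp only
        rw [← ENNReal.ofReal_add (by positivity) (by positivity), ← add_div,
          div_self (by positivity), ENNReal.ofReal_one]
    _ = powerMoment ν 0 ^ 2 := by
        rw [lintegral_one, ← univ_prod_univ, Measure.prod_prod, powerMoment_zero, sq]

lemma IsMeasureProfile.powerMoment_zero_le_one [SFinite ν] (hν : IsMeasureProfile K ν)
    (hK : ∀ y z, 0 < y → 0 < z → 2 ≤ K y z) (hfin : powerMoment ν 0 < ⊤) :
    powerMoment ν 0 ≤ 1 := by
  have hsq : powerMoment ν 0 * powerMoment ν 0 ≤ powerMoment ν 0 * 1 := calc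
    powerMoment ν 0 * powerMoment ν 0
        = ∫⁻ p, ENNReal.ofReal (2 * (p.2 / (p.1 + p.2))) ∂ν.prod ν := by
      rw [lintegral_prod_self_div_add hν.ae_pos, sq]
    _ ≤ ∫⁻ p, ENNReal.ofReal
          (p.1 * K p.1 p.2 * ∫ x in p.1..p.1 + p.2, x ^ ((0 : ℝ) - 2)) ∂ν.prod ν := by
      refine lintegral_mono_ae ((ae_pos_prod hν.ae_pos).mono fun p ⟨hy, hz⟩ =>
        ENNReal.ofReal_le_ofReal ?_)
      rw [zero_sub, integral_rpow_neg_two hy hz]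
      calc 2 * (p.2 / (p.1 + p.2)) ≤ K p.1 p.2 * (p.2 / (p.1 + p.2)) := by
            gcongr; exact hK _ _ hy hz
        _ = p.1 * K p.1 p.2 * (p.2 / (p.1 * (p.1 + p.2))) := by field_simp
    _ = powerMoment ν 0 * 1 := by rw [← hν.powerMoment_eq_lintegral 0, mul_one]
  rcases eq_or_ne (powerMoment ν 0) 0 with hzero | hne
  · exact hzero.trans_le zero_le
  · exact (ENNReal.mul_le_mul_iff_right hne hfin.ne).1 hsq

lemma mul_integral_rpow_neg_le (hα : 0 ≤ α) (hα' : α < 1) (hε : 0 ≤ ε)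
    (hK : ∀ y z, 0 < y → 0 < z → K y z ≤ 2 + ε * ratioPowSum α y z) (hy : 0 < y) (hz : 0 < z) :
    y * K y z * ∫ x in y..y + z, x ^ (-α) ≤
      (2 + ε) / (1 - α) * (y ^ (1 : ℝ) * z ^ (1 - α)) +
        ε / (1 - α) * (y ^ (1 - α) * z ^ (1 : ℝ)) := by
  set I : ℝ := ∫ x in y..y + z, x ^ (-α)
  have hsub : 0 < 1 - α := by linarith
  have hIy : I ≤ z * y ^ (-α) := integral_rpow_le_mul_rpow (by linarith) hy hz
  have hIz : I ≤ z ^ (1 - α) / (1 - α) := integral_rpow_neg_le_rpow_one_sub hα hα' hy hz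
  have hconst : 2 * y * I ≤ 2 / (1 - α) * (y * z ^ (1 - α)) := calc
    2 * y * I ≤ 2 * y * (z ^ (1 - α) / (1 - α)) := by gcongr
    _ = 2 / (1 - α) * (y * z ^ (1 - α)) := by ring
  have hdecr : ε * y * (y ^ α * z ^ (-α)) * I ≤ ε / (1 - α) * (y * z ^ (1 - α)) := calc
    ε * y * (y ^ α * z ^ (-α)) * I ≤ ε * y * (y ^ α * z ^ (-α)) * (z * y ^ (-α)) := by gcongr
    _ = ε * (y * z ^ (1 - α)) := by
      rw [sub_eq_add_neg, rpow_add hz, rpow_one, rpow_neg hy.le]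
      field_simp
    _ ≤ ε / (1 - α) * (y * z ^ (1 - α)) := by
      gcongr
      exact (le_div_iff₀ hsub).2 (mul_le_of_le_one_right hε (by linarith))
  have hincr : ε * y * (y ^ (-α) * z ^ α) * I ≤ ε / (1 - α) * (y ^ (1 - α) * z) := calc
    ε * y * (y ^ (-α) * z ^ α) * I
        ≤ ε * y * (y ^ (-α) * z ^ α) * (z ^ (1 - α) / (1 - α)) := by gcongr
    _ = ε / (1 - α) * (y ^ (1 - α) * z) := by
      rw [sub_eq_add_neg 1 α, rpow_add hy, rpow_add hz, rpow_one, rpow_one, rpow_neg hz.le]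
      field_simp
  have hIpos : 0 ≤ I := integral_rpow_nonneg _ hy hz
  calc y * K y z * I ≤ y * (2 + ε * ratioPowSum α y z) * I := by gcongr; exact hK y z hy hz
    _ = 2 * y * I + ε * y * (y ^ α * z ^ (-α)) * I + ε * y * (y ^ (-α) * z ^ α) * I := by
      rw [ratioPowSum_eq hy hz]; ring
    _ ≤ _ := by
      rw [rpow_one, rpow_one, add_div, add_mul]
      exact add_le_add (add_le_add hconst hdecr) hincr

lemma fluxPairing_rpow_neg_le [SFinite ν] (hν : ∀ᵐ x ∂ν, 0 < x) (hν₁ : powerMoment ν 1 = 1)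
    (hα : 0 ≤ α) (hα' : α < 1) (hε : 0 ≤ ε)
    (hK : ∀ y z, 0 < y → 0 < z → K y z ≤ 2 + ε * ratioPowSum α y z) :
    fluxPairing K ν (fun x => ENNReal.ofReal (x ^ (-α))) ≤
      ENNReal.ofReal ((2 + 2 * ε) / (1 - α)) * powerMoment ν (1 - α) := by
  have : 0 < 1 - α := by linarith
  calc fluxPairing K ν (fun x => ENNReal.ofReal (x ^ (-α)))
      = ∫⁻ p, ENNReal.ofReal (p.1 * K p.1 p.2 * ∫ x in p.1..p.1 + p.2, x ^ (-α)) ∂ν.prod ν :=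
        fluxPairing_rpow hν _
    _ ≤ ∫⁻ p, (ENNReal.ofReal ((2 + ε) / (1 - α)) *
            (ENNReal.ofReal (p.1 ^ (1 : ℝ)) * ENNReal.ofReal (p.2 ^ (1 - α))) +
          ENNReal.ofReal (ε / (1 - α)) *
            (ENNReal.ofReal (p.1 ^ (1 - α)) * ENNReal.ofReal (p.2 ^ (1 : ℝ)))) ∂ν.prod ν := by
        refine lintegral_mono_ae ((ae_pos_prod hν).mono fun p ⟨hy, hz⟩ => ?_)
        refine (ENNReal.ofReal_le_ofReal (mul_integral_rpow_neg_le hα hα' hε hK hy hz)).trans_eq ?_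
        rw [ENNReal.ofReal_add (by positivity) (by positivity), ENNReal.ofReal_mul (by positivity),
          ENNReal.ofReal_mul (by positivity), ENNReal.ofReal_mul (by positivity),
          ENNReal.ofReal_mul (by positivity)]
    _ = ENNReal.ofReal ((2 + ε) / (1 - α)) * powerMoment ν (1 - α) +
          ENNReal.ofReal (ε / (1 - α)) * powerMoment ν (1 - α) := by
        rw [lintegral_add_left (by fun_prop), lintegral_const_mul _ (by fun_prop),
          lintegral_const_mul _ (by fun_prop), lintegral_prod_ofReal_rpow_mul,
          lintegral_prod_ofReal_rpow_mul, hν₁, one_mul, mul_one]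
    _ = ENNReal.ofReal ((2 + 2 * ε) / (1 - α)) * powerMoment ν (1 - α) := by
        rw [← add_mul, ← ENNReal.ofReal_add (by positivity) (by positivity), ← add_div]
        ring_nf

lemma IsMeasureProfile.powerMoment_two_sub_le [SFinite ν] (hν : IsMeasureProfile K ν)
    (hα : 0 ≤ α) (hα' : α < 1) (hε : 0 ≤ ε)
    (hK : ∀ y z, 0 < y → 0 < z → K y z ≤ 2 + ε * ratioPowSum α y z)
    (hν₀ : powerMoment ν 0 ≤ 1) :
    powerMoment ν (2 - α) ≤ ENNReal.ofReal ((2 + 2 * ε) / (1 - α)) := by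
  have hinterp : powerMoment ν (1 - α) ≤ 1 := calc
    powerMoment ν (1 - α) = powerMoment ν (α * 0 + (1 - α) * 1) := by ring_nf
    _ ≤ powerMoment ν 0 ^ α * powerMoment ν 1 ^ (1 - α) :=
      powerMoment_le_rpow_mul_rpow hν.ae_pos hα (by linarith) (by ring) 0 1
    _ ≤ 1 := by
      rw [hν.powerMoment_one, ENNReal.one_rpow, mul_one]
      exact ENNReal.rpow_le_one hν₀ hα
  rw [hν.powerMoment_eq_fluxPairing, sub_sub_cancel_left]
  exact (fluxPairing_rpow_neg_le hν.ae_pos hν.powerMoment_one hα hα' hε hK).trans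
    (mul_le_of_le_one_right' hinterp)

lemma IsMeasureProfile.ofReal_le_powerMoment [SFinite ν] (hν : IsMeasureProfile K ν)
    (hα : 0 ≤ α) (hα' : α < 1) (hε : 0 ≤ ε)
    (hK : ∀ y z, 0 < y → 0 < z → K y z ≤ 2 + ε * ratioPowSum α y z)
    (hν₀ : powerMoment ν 0 ≤ 1) :
    ENNReal.ofReal ((1 - α) / (2 + 2 * ε)) ≤ powerMoment ν α := by
  have : 0 < 1 - α := by linarith
  set C : ℝ := (2 + 2 * ε) / (1 - α)
  have hC : 0 < C := by positivity
  have hlyapunov : 1 ≤ (powerMoment ν α * ENNReal.ofReal C) ^ (1 / 2 : ℝ) := calc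
    1 = powerMoment ν (1 / 2 * α + 1 / 2 * (2 - α)) := by
      rw [← hν.powerMoment_one]; ring_nf
    _ ≤ powerMoment ν α ^ (1 / 2 : ℝ) * powerMoment ν (2 - α) ^ (1 / 2 : ℝ) :=
      powerMoment_le_rpow_mul_rpow hν.ae_pos (by norm_num) (by norm_num) (by norm_num) _ _
    _ ≤ (powerMoment ν α * ENNReal.ofReal C) ^ (1 / 2 : ℝ) := by
      rw [ENNReal.mul_rpow_of_nonneg _ _ (by norm_num)]
      gcongr
      exact hν.powerMoment_two_sub_le hα hα' hε hK hν₀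
  have hprod : 1 ≤ powerMoment ν α * ENNReal.ofReal C := by
    rwa [← ENNReal.one_rpow (1 / 2), ENNReal.rpow_le_rpow_iff (by norm_num)] at hlyapunov
  rw [← inv_div, ENNReal.ofReal_inv_of_pos hC]
  exact ENNReal.inv_le_iff_le_mul (by simp [hC]) (by simp) |>.2 (by rwa [mul_comm])

end MomentBounds

section SectionFlux

variable {K : ℝ → ℝ → ℝ} {ν : Measure ℝ} {α ε κ x y : ℝ}

/-- The contribution to `massFlux K ν x` of the particles of size `y < x`, per unit of `ν`. -/
noncomputable def sectionFlux (K : ℝ → ℝ → ℝ) (ν : Measure ℝ) (x y : ℝ) : ℝ≥0∞ :=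
  ∫⁻ z in Ioi (x - y), ENNReal.ofReal (y * K y z) ∂ν

lemma measurable_sectionFlux [SFinite ν] (hK : Measurable (Function.uncurry K)) (x : ℝ) :
    Measurable (sectionFlux K ν x) := by
  have hT : MeasurableSet {p : ℝ × ℝ | x - p.1 < p.2} :=
    measurableSet_lt (measurable_const.sub measurable_fst) measurable_snd
  have hk : Measurable fun p : ℝ × ℝ => ENNReal.ofReal (p.1 * Function.uncurry K p) := by
    fun_prop
  convert (hk.indicator hT).lintegral_prod_right' (ν := ν) using 2 with y
  exact (lintegral_indicator (measurable_prodMk_left hT) _).symm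

lemma massFlux_eq_setLIntegral_sectionFlux [SFinite ν] (hν : ∀ᵐ x ∂ν, 0 < x)
    (hK : Measurable (Function.uncurry K)) (x : ℝ) :
    massFlux K ν x = ∫⁻ y in Ioo 0 x, sectionFlux K ν x y ∂ν := by
  set T : Set (ℝ × ℝ) := {p | x ∈ Ioo p.1 (p.1 + p.2)}
  have hT : MeasurableSet T := measurable_prodMk_left measurableSet_prod_mem_Ioo
  have hk : Measurable fun p : ℝ × ℝ => ENNReal.ofReal (p.1 * Function.uncurry K p) := by
    fun_prop
  have hinner (y : ℝ) (hy : 0 < y) :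
      ∫⁻ z in {z | (y, z) ∈ T}, ENNReal.ofReal (y * K y z) ∂ν =
        (Ioo 0 x).indicator (sectionFlux K ν x) y := by
    by_cases hyx : y < x
    · rw [indicator_of_mem (show y ∈ Ioo 0 x from ⟨hy, hyx⟩), sectionFlux]
      congr 2
      ext z
      simp [T, hyx, sub_lt_iff_lt_add']
    · rw [indicator_of_notMem fun h => hyx h.2]
      simp [T, hyx]
  calc massFlux K ν x
      = ∫⁻ p, T.indicator (fun p => ENNReal.ofReal (p.1 * K p.1 p.2)) p ∂ν.prod ν :=
        (lintegral_indicator hT _).symm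
    _ = ∫⁻ y, ∫⁻ z, T.indicator (fun p => ENNReal.ofReal (p.1 * K p.1 p.2)) (y, z) ∂ν ∂ν :=
        lintegral_prod _ (hk.indicator hT).aemeasurable
    _ = ∫⁻ y, (Ioo 0 x).indicator (sectionFlux K ν x) y ∂ν :=
        lintegral_congr_ae (hν.mono fun y hy =>
          (lintegral_indicator (measurable_prodMk_left hT) _).trans (hinner y hy))
    _ = ∫⁻ y in Ioo 0 x, sectionFlux K ν x y ∂ν := lintegral_indicator measurableSet_Ioo _

lemma massFlux_of_nonpos [SFinite ν] (hν : ∀ᵐ x ∂ν, 0 < x)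
    (hK : Measurable (Function.uncurry K)) (hx : x ≤ 0) : massFlux K ν x = 0 := by
  simp [massFlux_eq_setLIntegral_sectionFlux hν hK, Ioo_eq_empty hx.not_gt]

lemma sectionFlux_lt_top (hν₁ : powerMoment ν 1 < ⊤) (hα : 0 ≤ α) (hα' : α ≤ 1) (hε : 0 ≤ ε)
    (hK : ∀ y z, 0 < y → 0 < z → K y z ≤ 2 + ε * ratioPowSum α y z) (hy : 0 < y) (hyx : y < x) :
    sectionFlux K ν x y < ⊤ := by
  set d : ℝ := x - y
  have hd : 0 < d := sub_pos.2 hyx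
  have hbound (z : ℝ) (hz : d < z) :
      y * K y z ≤ y * (2 + ε * ratioPowSum α y d) / d * z ^ (1 : ℝ) := calc
    y * K y z ≤ y * (2 + ε * ratioPowSum α y z) := by gcongr; exact hK y z hy (hd.trans hz)
    _ ≤ y * (z / d * 2 + ε * (z / d * ratioPowSum α y d)) := by
      gcongr
      · exact le_mul_of_one_le_left two_pos.le ((one_le_div hd).2 hz.le)
      · exact ratioPowSum_le_div_mul hα hα' hy hd hz.le
    _ = y * (2 + ε * ratioPowSum α y d) / d * z ^ (1 : ℝ) := by rw [rpow_one]; ring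
  have hnonneg : 0 ≤ ratioPowSum α y d := ratioPowSum_nonneg hy.le hd.le
  calc sectionFlux K ν x y
      ≤ ∫⁻ z in Ioi d, ENNReal.ofReal (y * (2 + ε * ratioPowSum α y d) / d) *
          ENNReal.ofReal (z ^ (1 : ℝ)) ∂ν :=
        setLIntegral_mono' measurableSet_Ioi fun z hz => by
          rw [← ENNReal.ofReal_mul (by positivity)]
          exact ENNReal.ofReal_le_ofReal (hbound z hz)
    _ ≤ ENNReal.ofReal (y * (2 + ε * ratioPowSum α y d) / d) * powerMoment ν 1 := by
        rw [lintegral_const_mul _ (by fun_prop)]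
        gcongr
        exact setLIntegral_le_lintegral _ _
    _ < ⊤ := ENNReal.mul_lt_top ENNReal.ofReal_lt_top hν₁

lemma massFlux_eq_top [SFinite ν] (hν : ∀ᵐ x ∂ν, 0 < x) (hν₁ : powerMoment ν 1 < ⊤)
    (hα : 0 ≤ α) (hκ : 0 < κ) (hK : ∀ y z, 0 < y → 0 < z → κ * (z / y) ^ α ≤ K y z)
    (htop : powerMoment ν (1 - α) = ⊤) (hx : 0 < x) (hνx : ν (Ioi x) ≠ 0) :
    massFlux K ν x = ⊤ := by
  have hnear : ∫⁻ y in Ioo 0 x, ENNReal.ofReal (y ^ (1 - α)) ∂ν = ⊤ := by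
    by_contra hne
    exact (powerMoment_lt_top_of_setLIntegral_Ioo hν hν₁ (by linarith) hx
      (lt_top_iff_ne_top.2 hne)).ne htop
  have hpointwise (y : ℝ) (hy : y ∈ Ioo 0 x) (z : ℝ) (hz : z ∈ Ioi x) :
      ENNReal.ofReal (κ * x ^ α) * ENNReal.ofReal (y ^ (1 - α)) ≤
        ENNReal.ofReal (y * K y z) := by
    rw [← ENNReal.ofReal_mul (by positivity)]
    refine ENNReal.ofReal_le_ofReal ?_
    calc κ * x ^ α * y ^ (1 - α) = y * (κ * (x / y) ^ α) := by
          rw [rpow_sub hy.1, rpow_one, div_rpow hx.le hy.1.le]; ring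
      _ ≤ y * (κ * (z / y) ^ α) := by
          have := hy.1
          have : x < z := hz
          gcongr
      _ ≤ y * K y z := mul_le_mul_of_nonneg_left (hK y z hy.1 (hx.trans hz)) hy.1.le
  refine top_le_iff.1 ?_
  calc ⊤ = (∫⁻ y in Ioo 0 x, ENNReal.ofReal (κ * x ^ α) * ENNReal.ofReal (y ^ (1 - α)) ∂ν) *
        ν (Ioi x) := by
        rw [lintegral_const_mul _ (by fun_prop), hnear,
          ENNReal.mul_top (ENNReal.ofReal_pos.2 (by positivity)).ne', ENNReal.top_mul hνx]
    _ ≤ ∫⁻ p in Ioo 0 x ×ˢ Ioi x, ENNReal.ofReal (p.1 * K p.1 p.2) ∂ν.prod ν :=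
        setLIntegral_mul_measure_le_setLIntegral_prod measurableSet_Ioo measurableSet_Ioi
          (by fun_prop) hpointwise
    _ ≤ massFlux K ν x :=
        lintegral_mono_set fun p ⟨hy, hz⟩ => ⟨hy.2, lt_add_of_pos_of_lt hy.1 hz⟩

end SectionFlux

section ProfileMeasure

variable {K : ℝ → ℝ → ℝ} {φ : ℝ → ℝ} {α ε x y : ℝ}

/-- The size distribution `φ(x) dx` on `(0, ∞)`. -/
noncomputable def profileMeasure (φ : ℝ → ℝ) : Measure ℝ :=
  (volume.restrict (Ioi 0)).withDensity fun x => ENNReal.ofReal (φ x)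

instance (φ : ℝ → ℝ) : SFinite (profileMeasure φ) := by
  unfold profileMeasure; infer_instance

lemma ae_pos_profileMeasure (φ : ℝ → ℝ) : ∀ᵐ x ∂profileMeasure φ, 0 < x :=
  (withDensity_absolutelyContinuous _ _).ae_le (ae_restrict_mem measurableSet_Ioi)

lemma setLIntegral_profileMeasure (hφ : AEMeasurable φ (volume.restrict (Ioi 0))) {s : Set ℝ}
    (hs : MeasurableSet s) (hs₀ : s ⊆ Ioi 0) {f : ℝ → ℝ≥0∞} (hf : Measurable f) :
    ∫⁻ x in s, f x ∂profileMeasure φ = ∫⁻ x in s, ENNReal.ofReal (φ x) * f x := by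
  rw [profileMeasure, setLIntegral_withDensity_eq_lintegral_mul₀ hφ.ennreal_ofReal
    hf.aemeasurable hs, Measure.restrict_restrict_of_subset hs₀]
  rfl

lemma lintegral_profileMeasure (hφ : AEMeasurable φ (volume.restrict (Ioi 0)))
    {f : ℝ → ℝ≥0∞} (hf : Measurable f) :
    ∫⁻ x, f x ∂profileMeasure φ = ∫⁻ x in Ioi 0, ENNReal.ofReal (φ x) * f x := by
  rw [← setLIntegral_profileMeasure hφ measurableSet_Ioi subset_rfl hf,
    Measure.restrict_eq_self_of_ae_mem (s := Ioi 0) (ae_pos_profileMeasure φ)]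

lemma powerMoment_profileMeasure (hφ : AEMeasurable φ (volume.restrict (Ioi 0))) (p : ℝ) :
    powerMoment (profileMeasure φ) p = ∫⁻ x in Ioi 0, ENNReal.ofReal (x ^ p * φ x) := by
  rw [powerMoment, lintegral_profileMeasure hφ (by fun_prop)]
  refine setLIntegral_congr_fun measurableSet_Ioi fun x hx => ?_
  rw [mul_comm, ENNReal.ofReal_mul (rpow_nonneg (le_of_lt hx) p)]

lemma IsProfile.aemeasurable (hφ : IsProfile K φ) : AEMeasurable φ (volume.restrict (Ioi 0)) :=
  hφ.1.aestronglyMeasurable.aemeasurable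

lemma IsProfile.powerMoment_one (hφ : IsProfile K φ) (hnorm : IsNormalised φ) :
    powerMoment (profileMeasure φ) 1 = 1 := by
  have hnonneg : 0 ≤ᵐ[volume.restrict (Ioi 0)] fun x => x * φ x := by
    filter_upwards [hφ.2.1, ae_restrict_mem measurableSet_Ioi] with x hφx hx
    exact mul_nonneg (le_of_lt hx) hφx
  simp_rw [powerMoment_profileMeasure hφ.aemeasurable, rpow_one]
  rw [← ofReal_integral_eq_lintegral_ofReal hφ.2.2.1 hnonneg, hnorm, ENNReal.ofReal_one]

lemma IsProfile.integral_Ioi_eq_sectionFlux (hφ : IsProfile K φ)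
    (hK : Measurable (Function.uncurry K)) (hK₀ : ∀ y z, 0 < y → 0 < z → 0 ≤ K y z)
    (hy : 0 < y) (hyx : y < x) (hφy : 0 ≤ φ y) :
    ∫ z in Ioi (x - y), y * K y z * φ y * φ z =
      (ENNReal.ofReal (φ y) * sectionFlux K (profileMeasure φ) x y).toReal := by
  have hsub : Ioi (x - y) ⊆ Ioi 0 := Ioi_subset_Ioi (sub_pos.2 hyx).le
  have hφm := hφ.aemeasurable.mono_set hsub
  have hKy : Measurable (K y) := hK.comp measurable_prodMk_left
  have hnonneg : 0 ≤ᵐ[volume.restrict (Ioi (x - y))] fun z => y * K y z * φ y * φ z := by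
    filter_upwards [ae_restrict_of_ae_restrict_of_subset hsub hφ.2.1,
      ae_restrict_mem measurableSet_Ioi] with z hφz hz
    have := hK₀ y z hy (hsub hz)
    positivity
  rw [integral_eq_lintegral_of_nonneg_ae hnonneg (by fun_prop), sectionFlux,
    setLIntegral_profileMeasure hφ.aemeasurable measurableSet_Ioi hsub (by fun_prop),
    ← lintegral_const_mul'' _ (by fun_prop)]
  congr 1
  refine setLIntegral_congr_fun measurableSet_Ioi fun z hz => ?_
  have hyK : 0 ≤ y * K y z := mul_nonneg hy.le (hK₀ y z hy (hsub hz))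
  rw [ENNReal.ofReal_mul (by positivity), ENNReal.ofReal_mul hyK]
  ring

lemma IsProfile.integral_eq_toReal_massFlux (hφ : IsProfile K φ) (hnorm : IsNormalised φ)
    (hα : 0 ≤ α) (hα' : α ≤ 1) (hε : 0 ≤ ε) (hKm : Measurable (Function.uncurry K))
    (hK₀ : ∀ y z, 0 < y → 0 < z → 0 ≤ K y z)
    (hK : ∀ y z, 0 < y → 0 < z → K y z ≤ 2 + ε * ratioPowSum α y z) (x : ℝ) :
    ∫ y in Ioo 0 x, ∫ z in Ioi (x - y), y * K y z * φ y * φ z =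
      (massFlux K (profileMeasure φ) x).toReal := by
  set J : ℝ → ℝ≥0∞ := sectionFlux K (profileMeasure φ) x
  have hJ : Measurable J := measurable_sectionFlux hKm x
  have hsub : Ioo 0 x ⊆ Ioi 0 := Ioo_subset_Ioi_self
  have hφm := hφ.aemeasurable.mono_set hsub
  have hφ₀ := ae_restrict_of_ae_restrict_of_subset hsub hφ.2.1
  have hν₁ : powerMoment (profileMeasure φ) 1 < ⊤ :=
    (hφ.powerMoment_one hnorm).trans_lt ENNReal.one_lt_top
  calc ∫ y in Ioo 0 x, ∫ z in Ioi (x - y), y * K y z * φ y * φ z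
      = ∫ y in Ioo 0 x, (ENNReal.ofReal (φ y) * J y).toReal := by
        refine integral_congr_ae ?_
        filter_upwards [hφ₀, ae_restrict_mem measurableSet_Ioo] with y hφy hy
        exact hφ.integral_Ioi_eq_sectionFlux hKm hK₀ hy.1 hy.2 hφy
    _ = (∫⁻ y in Ioo 0 x, ENNReal.ofReal (φ y) * J y).toReal := by
        refine integral_toReal (by fun_prop) ?_
        filter_upwards [ae_restrict_mem measurableSet_Ioo] with y hy
        exact ENNReal.mul_lt_top ENNReal.ofReal_lt_top
          (sectionFlux_lt_top hν₁ hα hα' hε hK hy.1 hy.2)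
    _ = (massFlux K (profileMeasure φ) x).toReal := by
        rw [massFlux_eq_setLIntegral_sectionFlux (ae_pos_profileMeasure φ) hKm,
          setLIntegral_profileMeasure hφ.aemeasurable measurableSet_Ioo hsub hJ]

end ProfileMeasure

section MeasureProfile

variable {K : ℝ → ℝ → ℝ} {φ : ℝ → ℝ} {α ε κ : ℝ}

/- A priori the flux could be infinite, and the junk value `0` of the divergent integrals would then
make `φ` vanish near `0`; but a `φ` vanishing near `0` has a finite flux. -/
lemma IsProfile.powerMoment_one_sub_lt_top (hφ : IsProfile K φ) (hnorm : IsNormalised φ)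
    (hα : 0 ≤ α) (hκ : 0 < κ) (hflux : ∀ᵐ x ∂volume.restrict (Ioi 0),
      x ^ 2 * φ x = (massFlux K (profileMeasure φ) x).toReal)
    (hK : ∀ y z, 0 < y → 0 < z → κ * (z / y) ^ α ≤ K y z) :
    powerMoment (profileMeasure φ) (1 - α) < ⊤ := by
  set ν := profileMeasure φ
  have hν := ae_pos_profileMeasure φ
  have hν₁ : powerMoment ν 1 = 1 := hφ.powerMoment_one hnorm
  have hν₁' : powerMoment ν 1 < ⊤ := hν₁.trans_lt ENNReal.one_lt_top
  obtain ⟨δ, hδ, hνδ⟩ := exists_measure_Ioi_pos hν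
    (ne_zero_of_powerMoment_ne_zero (hν₁.trans_ne one_ne_zero))
  by_contra htop
  rw [not_lt_top_iff] at htop
  have hvanish : ∀ᵐ x ∂volume.restrict (Ioo 0 δ), ENNReal.ofReal (φ x) * 1 = 0 := by
    filter_upwards [ae_restrict_of_ae_restrict_of_subset Ioo_subset_Ioi_self hflux,
      ae_restrict_mem measurableSet_Ioo] with x hxφ hx
    have hνx : ν (Ioi x) ≠ 0 := (hνδ.trans_le (measure_mono (Ioi_subset_Ioi hx.2.le))).ne'
    rw [massFlux_eq_top hν hν₁' hα hκ hK htop hx.1 hνx, ENNReal.toReal_top] at hxφ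
    rw [(mul_eq_zero.1 hxφ).resolve_left (pow_pos hx.1 2).ne', ENNReal.ofReal_zero, zero_mul]
  have hnull : ν (Ioo 0 δ) = 0 := by
    rw [← setLIntegral_one, setLIntegral_profileMeasure hφ.aemeasurable measurableSet_Ioo
      Ioo_subset_Ioi_self measurable_const, lintegral_congr_ae hvanish, lintegral_zero]
  refine (powerMoment_lt_top_of_setLIntegral_Ioo hν hν₁' (by linarith) hδ ?_).ne htop
  rw [setLIntegral_measure_zero _ _ hnull]
  exact ENNReal.zero_lt_top

lemma ae_massFlux_lt_top {ν : Measure ℝ} [SFinite ν] (hν : ∀ᵐ x ∂ν, 0 < x)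
    (hν₁ : powerMoment ν 1 = 1) (hfin : powerMoment ν (1 - α) < ⊤) (hα : 0 ≤ α) (hα' : α < 1)
    (hε : 0 ≤ ε) (hKm : Measurable (Function.uncurry K))
    (hK : ∀ y z, 0 < y → 0 < z → K y z ≤ 2 + ε * ratioPowSum α y z) :
    ∀ᵐ x ∂volume.restrict (Ioi 0), massFlux K ν x < ⊤ := by
  have hpair : ∫⁻ x, ENNReal.ofReal (x ^ (-α)) * massFlux K ν x < ⊤ := by
    rw [lintegral_mul_massFlux hKm (by fun_prop)]
    exact (fluxPairing_rpow_neg_le hν hν₁ hα hα' hε hK).trans_lt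
      (ENNReal.mul_lt_top ENNReal.ofReal_lt_top hfin)
  have hm : Measurable fun x => ENNReal.ofReal (x ^ (-α)) * massFlux K ν x :=
    Measurable.mul (by fun_prop) (measurable_massFlux hKm)
  filter_upwards [ae_restrict_of_ae (ae_lt_top hm hpair.ne), ae_restrict_mem measurableSet_Ioi]
    with x hx hx₀
  exact ENNReal.lt_top_of_mul_ne_top_right hx.ne
    (ENNReal.ofReal_pos.2 (rpow_pos_of_pos hx₀ _)).ne'

theorem IsProfile.isMeasureProfile (hφ : IsProfile K φ) (hnorm : IsNormalised φ)
    (hα : 0 ≤ α) (hα' : α < 1) (hε : 0 ≤ ε) (hκ : 0 < κ) (hKm : Measurable (Function.uncurry K))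
    (hKle : ∀ y z, 0 < y → 0 < z → K y z ≤ 2 + ε * ratioPowSum α y z)
    (hKge : ∀ y z, 0 < y → 0 < z → κ * (z / y) ^ α ≤ K y z) :
    IsMeasureProfile K (profileMeasure φ) := by
  have hν := ae_pos_profileMeasure φ
  have hν₁ := hφ.powerMoment_one hnorm
  have hK₀ (y z : ℝ) (hy : 0 < y) (hz : 0 < z) : 0 ≤ K y z :=
    le_trans (by positivity) (hKge y z hy hz)
  have hflux : ∀ᵐ x ∂volume.restrict (Ioi 0),
      x ^ 2 * φ x = (massFlux K (profileMeasure φ) x).toReal := by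
    filter_upwards [hφ.2.2.2] with x hx
    rw [hx, hφ.integral_eq_toReal_massFlux hnorm hα hα'.le hε hKm hK₀ hKle]
  have hfin := ae_massFlux_lt_top hν hν₁
    (hφ.powerMoment_one_sub_lt_top hnorm hα hκ hflux hKge) hα hα' hε hKm hKle
  refine ⟨hν, hν₁, fun g hg => ?_⟩
  calc ∫⁻ x, g x * ENNReal.ofReal (x ^ 2) ∂profileMeasure φ
      = ∫⁻ x in Ioi 0, ENNReal.ofReal (φ x) * (g x * ENNReal.ofReal (x ^ 2)) :=
        lintegral_profileMeasure hφ.aemeasurable (by fun_prop)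
    _ = ∫⁻ x in Ioi 0, g x * massFlux K (profileMeasure φ) x := by
        refine lintegral_congr_ae ?_
        filter_upwards [hflux, hfin] with x hx hx'
        rw [← ENNReal.ofReal_toReal hx'.ne, ← hx, ENNReal.ofReal_mul (by positivity)]
        ring
    _ = ∫⁻ x, g x * massFlux K (profileMeasure φ) x := by
        refine setLIntegral_eq_of_support_subset fun x hx => ?_
        by_contra hx₀
        exact hx (by simp [massFlux_of_nonpos hν hKm (not_lt.1 hx₀)])
    _ = fluxPairing K (profileMeasure φ) g := lintegral_mul_massFlux hKm hg

end MeasureProfile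

section BetaW

variable {W : ℝ → ℝ → ℝ} {φ : ℝ → ℝ} {α p x y : ℝ}

lemma integrableOn_rpow_mul (hφ : AEMeasurable φ (volume.restrict (Ioi 0)))
    (hφ₀ : ∀ᵐ x ∂volume.restrict (Ioi 0), 0 ≤ φ x)
    (hfin : powerMoment (profileMeasure φ) p < ⊤) :
    IntegrableOn (fun z => z ^ p * φ z) (Ioi 0) := by
  refine ⟨(AEMeasurable.mul (by fun_prop) hφ).aestronglyMeasurable, ?_⟩
  rw [hasFiniteIntegral_iff_ofReal, ← powerMoment_profileMeasure hφ]
  · exact hfin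
  · filter_upwards [hφ₀, ae_restrict_mem measurableSet_Ioi] with z hφz hz
    exact mul_nonneg (rpow_nonneg (le_of_lt hz) p) hφz

lemma integrableOn_ratioPowSum_mul (hφ : IntegrableOn (fun z => z ^ α * φ z) (Ioi 0))
    (hφ' : IntegrableOn (fun z => z ^ (-α) * φ z) (Ioi 0)) (hy : 0 < y) :
    IntegrableOn (fun z => ratioPowSum α y z * φ z) (Ioi 0) := by
  refine ((hφ'.const_mul (y ^ α)).add (hφ.const_mul (y ^ (-α)))).congr ?_
  filter_upwards [ae_restrict_mem measurableSet_Ioi] with z hz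
  rw [ratioPowSum_eq hy hz, Pi.add_apply]
  ring

lemma integrableOn_mul_of_le_ratioPowSum (hWm : Measurable (Function.uncurry W))
    (hW₀ : ∀ y z, 0 < y → 0 < z → 0 ≤ W y z)
    (hW : ∀ y z, 0 < y → 0 < z → W y z ≤ ratioPowSum α y z)
    (hφ : AEMeasurable φ (volume.restrict (Ioi 0)))
    (hφ₀ : ∀ᵐ x ∂volume.restrict (Ioi 0), 0 ≤ φ x) (hy : 0 < y)
    (hint : IntegrableOn (fun z => ratioPowSum α y z * φ z) (Ioi 0)) :
    IntegrableOn (fun z => W y z * φ z) (Ioi 0) := by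
  have hWy : Measurable (W y) := hWm.comp measurable_prodMk_left
  refine hint.mono' (by fun_prop) ?_
  filter_upwards [hφ₀, ae_restrict_mem measurableSet_Ioi] with z hφz hz
  rw [norm_of_nonneg (mul_nonneg (hW₀ y z hy hz) hφz)]
  exact mul_le_mul_of_nonneg_right (hW y z hy hz) hφz

lemma betaW_le_div_mul_betaW_ratioPowSum (hα : 0 ≤ α) (hα' : α ≤ 1)
    (hW₀ : ∀ y z, 0 < y → 0 < z → 0 ≤ W y z)
    (hW : ∀ y z, 0 < y → 0 < z → W y z ≤ ratioPowSum α y z)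
    (hφ₀ : ∀ᵐ x ∂volume.restrict (Ioi 0), 0 ≤ φ x) (hx : 0 < x) (hxy : x ≤ y)
    (hint : IntegrableOn (fun z => ratioPowSum α x z * φ z) (Ioi 0)) :
    betaW W φ y ≤ y / x * betaW (ratioPowSum α) φ x := by
  have hy : 0 < y := hx.trans_le hxy
  rw [betaW, betaW, ← integral_const_mul]
  refine integral_mono_of_nonneg ?_ (hint.const_mul _) ?_ <;>
    filter_upwards [hφ₀, ae_restrict_mem measurableSet_Ioi] with z hφz hz
  · exact mul_nonneg (hW₀ y z hy hz) hφz
  · have hscale : ratioPowSum α y z ≤ y / x * ratioPowSum α x z := by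
      rw [ratioPowSum_comm α y, ratioPowSum_comm α x]
      exact ratioPowSum_le_div_mul hα hα' hz hx hxy
    rw [← mul_assoc]
    exact mul_le_mul_of_nonneg_right ((hW y z hy hz).trans hscale) hφz

lemma mul_rpow_neg_le_betaW {c : ℝ} (hc : 0 ≤ c)
    (hW : ∀ y z, 0 < y → 0 < z → c * ratioPowSum α y z ≤ W y z)
    (hφ₀ : ∀ᵐ x ∂volume.restrict (Ioi 0), 0 ≤ φ x) (hy : 0 < y)
    (hint : IntegrableOn (fun z => W y z * φ z) (Ioi 0)) :
    c * y ^ (-α) * ∫ z in Ioi 0, z ^ α * φ z ≤ betaW W φ y := by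
  rw [betaW, ← integral_const_mul]
  refine integral_mono_of_nonneg ?_ hint ?_ <;>
    filter_upwards [hφ₀, ae_restrict_mem measurableSet_Ioi] with z hφz hz
  · have := rpow_nonneg (le_of_lt hz) α
    positivity
  · rw [← mul_assoc, mul_assoc c]
    refine mul_le_mul_of_nonneg_right (le_trans ?_ (hW y z hy hz)) hφz
    rw [ratioPowSum_eq hy hz]
    have hz' : 0 < z := hz
    gcongr
    exact le_add_of_nonneg_left (by positivity)

lemma aestronglyMeasurable_betaW (hWm : Measurable (Function.uncurry W))
    (hφ : AEMeasurable φ (volume.restrict (Ioi 0))) :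
    AEStronglyMeasurable (betaW W φ) volume := by
  have hprod : AEMeasurable (fun p : ℝ × ℝ => Function.uncurry W p * φ p.2)
      (volume.prod (volume.restrict (Ioi 0))) :=
    hWm.aemeasurable.mul hφ.comp_snd
  exact hprod.aestronglyMeasurable.integral_prod_right'

lemma integrableOn_betaW_div_mul_exp_neg (hα : 0 ≤ α) (hα' : α ≤ 1)
    (hWm : Measurable (Function.uncurry W)) (hW₀ : ∀ y z, 0 < y → 0 < z → 0 ≤ W y z)
    (hW : ∀ y z, 0 < y → 0 < z → W y z ≤ ratioPowSum α y z)
    (hφ : AEMeasurable φ (volume.restrict (Ioi 0)))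
    (hφ₀ : ∀ᵐ x ∂volume.restrict (Ioi 0), 0 ≤ φ x) (hx : 0 < x)
    (hint : IntegrableOn (fun z => ratioPowSum α x z * φ z) (Ioi 0)) :
    IntegrableOn (fun y => betaW W φ y / y * exp (-y)) (Ioi x) := by
  have hβ := (aestronglyMeasurable_betaW hWm hφ).aemeasurable.restrict (s := Ioi x)
  refine ((integrableOn_exp_neg_Ioi x).const_mul (betaW (ratioPowSum α) φ x / x)).mono'
    (by fun_prop) ?_
  filter_upwards [ae_restrict_mem measurableSet_Ioi] with y hxy
  have hy : 0 < y := hx.trans hxy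
  have hβ₀ : 0 ≤ betaW W φ y := integral_nonneg_of_ae <| by
    filter_upwards [hφ₀, ae_restrict_mem measurableSet_Ioi] with z hφz hz
    exact mul_nonneg (hW₀ y z hy hz) hφz
  rw [norm_of_nonneg (by positivity)]
  gcongr ?_ * _
  rw [div_le_iff₀ hy]
  exact (betaW_le_div_mul_betaW_ratioPowSum hα hα' hW₀ hW hφ₀ hx (le_of_lt hxy) hint).trans_eq
    (by ring)

end BetaW

section PhiDecay

variable {W : ℝ → ℝ → ℝ} {φ : ℝ → ℝ} {α ε A x y τ : ℝ}

lemma rpow_mul_exp_neg_two_div_four_le (hα : 0 ≤ α) (hα' : α ≤ 1) (hx : 0 < x) (hx₁ : x ≤ 1)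
    (hxy : x ≤ y) (hyx : y ≤ 2 * x) :
    x ^ (-1 - α) * (exp (-2) / 4) ≤ y ^ (-1 - α) * exp (-y) := by
  have hy : 0 < y := hx.trans_le hxy
  have htwo : (1 / 4 : ℝ) ≤ 2 ^ (-1 - α) := calc
    (1 / 4 : ℝ) = 2 ^ (-2 : ℝ) := by rw [rpow_neg two_pos.le, rpow_two]; norm_num
    _ ≤ 2 ^ (-1 - α) := rpow_le_rpow_of_exponent_le one_le_two (by linarith)
  calc x ^ (-1 - α) * (exp (-2) / 4) = 1 / 4 * x ^ (-1 - α) * exp (-2) := by ring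
    _ ≤ 2 ^ (-1 - α) * x ^ (-1 - α) * exp (-y) := by gcongr; linarith
    _ = (2 * x) ^ (-1 - α) * exp (-y) := by rw [mul_rpow two_pos.le hx.le]
    _ ≤ y ^ (-1 - α) * exp (-y) := by
      gcongr ?_ * _
      exact rpow_le_rpow_of_nonpos hy hyx (by linarith)

lemma mul_rpow_neg_one_sub_le_betaW_div_mul_exp_neg (hα : 0 ≤ α) (hα' : α ≤ 1) (hA : 0 ≤ A)
    (hβ : A * y ^ (-α) ≤ betaW W φ y) (hx : 0 < x) (hx₁ : x ≤ 1) (hxy : x ≤ y)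
    (hyx : y ≤ 2 * x) :
    A * (x ^ (-1 - α) * (exp (-2) / 4)) ≤ betaW W φ y / y * exp (-y) := by
  have hy : 0 < y := hx.trans_le hxy
  calc A * (x ^ (-1 - α) * (exp (-2) / 4)) ≤ A * (y ^ (-1 - α) * exp (-y)) :=
        mul_le_mul_of_nonneg_left (rpow_mul_exp_neg_two_div_four_le hα hα' hx hx₁ hxy hyx) hA
    _ = A * y ^ (-α) / y * exp (-y) := by
        rw [show -1 - α = -α - 1 by ring, rpow_sub_one hy.ne']; ring
    _ ≤ betaW W φ y / y * exp (-y) := by gcongr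

lemma le_Phi_sub_Phi_of_le_betaW (hα : 0 ≤ α) (hα' : α ≤ 1) (hε : 0 ≤ ε) (hA : 0 ≤ A)
    (hβ : ∀ y, 0 < y → A * y ^ (-α) ≤ betaW W φ y) (hx : 0 < x) (hx₁ : x ≤ 1) (hτ : 0 < τ)
    (hint : IntegrableOn (fun y => betaW W φ y / y * exp (-y)) (Ioi x)) :
    A * (exp (-2) / 4) * ε * x ^ (-1 - α) * min τ x ≤ Phi ε W φ x - Phi ε W φ (x + τ) := by
  set F : ℝ → ℝ := fun y => betaW W φ y / y * exp (-y)
  set C : ℝ := A * (x ^ (-1 - α) * (exp (-2) / 4))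
  have hσ : 0 < min τ x := lt_min hτ hx
  have hF₀ : 0 ≤ᵐ[volume.restrict (Ioc x (x + τ))] F := by
    filter_upwards [ae_restrict_mem measurableSet_Ioc] with y hy
    have hy₀ : 0 < y := hx.trans hy.1
    have : 0 ≤ betaW W φ y := le_trans (by positivity) (hβ y hy₀)
    positivity
  have hFC (y : ℝ) (hy : y ∈ Icc x (x + min τ x)) : C ≤ F y :=
    mul_rpow_neg_one_sub_le_betaW_div_mul_exp_neg hα hα' hA (hβ y (hx.trans_le hy.1)) hx hx₁ hy.1
      (by linarith [hy.2, min_le_right τ x])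
  have hFint : IntervalIntegrable F volume x (x + τ) :=
    (intervalIntegrable_iff_integrableOn_Ioc_of_le (by linarith)).2
      (hint.mono_set Ioc_subset_Ioi_self)
  have hstep : min τ x * C ≤ ∫ y in x..x + τ, F y := calc
    min τ x * C = ∫ _ in x..x + min τ x, C := by simp
    _ ≤ ∫ y in x..x + min τ x, F y :=
      intervalIntegral.integral_mono_on (by linarith) intervalIntegrable_const
        ((intervalIntegrable_iff_integrableOn_Ioc_of_le (by linarith)).2
          (hint.mono_set Ioc_subset_Ioi_self)) hFC
    _ ≤ ∫ y in x..x + τ, F y :=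
      intervalIntegral.integral_mono_interval le_rfl (by linarith)
        (by linarith [min_le_left τ x]) hF₀ hFint
  calc A * (exp (-2) / 4) * ε * x ^ (-1 - α) * min τ x = ε * (min τ x * C) := by ring
    _ ≤ ε * ∫ y in x..x + τ, F y := by gcongr
    _ = Phi ε W φ x - Phi ε W φ (x + τ) := by
      rw [Phi, Phi, ← mul_sub, intervalIntegral.integral_Ioi_sub_Ioi hint (by linarith)]

end PhiDecay

section Kern

variable {W : ℝ → ℝ → ℝ} {φ : ℝ → ℝ} {α c ε p x y z τ : ℝ}

lemma Kern_le_two_add (hε : 0 ≤ ε) (hW : ∀ y z, 0 < y → 0 < z → W y z ≤ ratioPowSum α y z)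
    (hy : 0 < y) (hz : 0 < z) : Kern ε W y z ≤ 2 + ε * ratioPowSum α y z := by
  rw [Kern]
  gcongr
  exact hW y z hy hz

lemma mul_rpow_le_Kern (hε : 0 ≤ ε) (hc : 0 ≤ c)
    (hW : ∀ y z, 0 < y → 0 < z → c * ratioPowSum α y z ≤ W y z) (hy : 0 < y) (hz : 0 < z) :
    ε * c * (z / y) ^ α ≤ Kern ε W y z := calc
  ε * c * (z / y) ^ α ≤ ε * (c * ratioPowSum α y z) := by
    rw [mul_assoc, ratioPowSum]
    gcongr
    exact le_add_of_nonneg_left (by positivity)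
  _ ≤ ε * W y z := by gcongr; exact hW y z hy hz
  _ ≤ Kern ε W y z := le_add_of_nonneg_left two_pos.le

lemma IsProfile.isMeasureProfile_Kern (hφ : IsProfile (Kern ε W) φ) (hnorm : IsNormalised φ)
    (hα : 0 ≤ α) (hα' : α < 1) (hε : 0 < ε) (hc : 0 < c) (hWm : Measurable (Function.uncurry W))
    (hWle : ∀ y z, 0 < y → 0 < z → W y z ≤ ratioPowSum α y z)
    (hWge : ∀ y z, 0 < y → 0 < z → c * ratioPowSum α y z ≤ W y z) :
    IsMeasureProfile (Kern ε W) (profileMeasure φ) :=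
  hφ.isMeasureProfile hnorm hα hα' hε.le (mul_pos hε hc) ((hWm.const_mul ε).const_add 2)
    (fun _ _ => Kern_le_two_add hε.le hWle) (fun _ _ => mul_rpow_le_Kern hε.le hc.le hWge)

lemma IsProfile.integrableOn_rpow_mul_Kern (hφ : IsProfile (Kern ε W) φ)
    (hν : IsMeasureProfile (Kern ε W) (profileMeasure φ)) (hα : 0 < α) (hε : 0 < ε) (hc : 0 < c)
    (hWge : ∀ y z, 0 < y → 0 < z → c * ratioPowSum α y z ≤ W y z) (hp : p ≤ 1) :
    IntegrableOn (fun z => z ^ p * φ z) (Ioi 0) :=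
  integrableOn_rpow_mul hφ.aemeasurable hφ.2.1 <| hν.powerMoment_lt_top (mul_pos hε hc) hα
    (fun _ _ => mul_rpow_le_Kern hε.le hc.le hWge) hp

lemma IsProfile.le_integral_rpow_mul (hφ : IsProfile (Kern ε W) φ)
    (hν : IsMeasureProfile (Kern ε W) (profileMeasure φ)) (hα : 0 < α) (hα' : α < 1) (hε : 0 < ε)
    (hc : 0 < c) (hWle : ∀ y z, 0 < y → 0 < z → W y z ≤ ratioPowSum α y z)
    (hWge : ∀ y z, 0 < y → 0 < z → c * ratioPowSum α y z ≤ W y z) :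
    (1 - α) / (2 + 2 * ε) ≤ ∫ z in Ioi 0, z ^ α * φ z := by
  have hnonneg : 0 ≤ᵐ[volume.restrict (Ioi 0)] fun z => z ^ α * φ z := by
    filter_upwards [hφ.2.1, ae_restrict_mem measurableSet_Ioi] with z hφz hz
    exact mul_nonneg (rpow_nonneg (le_of_lt hz) α) hφz
  have hKtwo (y z : ℝ) (hy : 0 < y) (hz : 0 < z) : 2 ≤ Kern ε W y z :=
    le_add_of_nonneg_right <| mul_nonneg hε.le <|
      (mul_nonneg hc.le (ratioPowSum_nonneg hy.le hz.le)).trans (hWge y z hy hz)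
  have hν₀ := hν.powerMoment_zero_le_one hKtwo <| hν.powerMoment_lt_top (mul_pos hε hc) hα
    (fun _ _ => mul_rpow_le_Kern hε.le hc.le hWge) zero_le_one
  rw [← ENNReal.ofReal_le_ofReal_iff (integral_nonneg_of_ae hnonneg),
    ofReal_integral_eq_lintegral_ofReal
      (hφ.integrableOn_rpow_mul_Kern hν hα hε hc hWge hα'.le) hnonneg,
    ← powerMoment_profileMeasure hφ.aemeasurable]
  exact hν.ofReal_le_powerMoment hα.le hα' hε.le (fun _ _ => Kern_le_two_add hε.le hWle) hν₀

theorem IsProfile.le_Phi_sub_Phi (hφ : IsProfile (Kern ε W) φ) (hnorm : IsNormalised φ)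
    (hα : 0 < α) (hα' : α < 1) (hε : 0 < ε) (hc : 0 < c) (hWm : Measurable (Function.uncurry W))
    (hWle : ∀ y z, 0 < y → 0 < z → W y z ≤ ratioPowSum α y z)
    (hWge : ∀ y z, 0 < y → 0 < z → c * ratioPowSum α y z ≤ W y z)
    (hx : 0 < x) (hx₁ : x ≤ 1) (hτ : 0 < τ) :
    c * ((1 - α) / (2 + 2 * ε)) * (exp (-2) / 4) * ε * x ^ (-1 - α) * min τ x ≤
      Phi ε W φ x - Phi ε W φ (x + τ) := by
  have : 0 < 1 - α := sub_pos.2 hα'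
  have hW₀ (y z : ℝ) (hy : 0 < y) (hz : 0 < z) : 0 ≤ W y z :=
    (mul_nonneg hc.le (ratioPowSum_nonneg hy.le hz.le)).trans (hWge y z hy hz)
  have hν := hφ.isMeasureProfile_Kern hnorm hα.le hα' hε hc hWm hWle hWge
  have hpow (p : ℝ) (hp : p ≤ 1) := hφ.integrableOn_rpow_mul_Kern hν hα hε hc hWge hp
  have hsum (y : ℝ) (hy : 0 < y) : IntegrableOn (fun z => ratioPowSum α y z * φ z) (Ioi 0) :=
    integrableOn_ratioPowSum_mul (hpow α hα'.le) (hpow (-α) (by linarith)) hy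
  refine le_Phi_sub_Phi_of_le_betaW hα.le hα'.le hε.le (by positivity) (fun y hy => ?_) hx hx₁ hτ
    (integrableOn_betaW_div_mul_exp_neg hα.le hα'.le hWm hW₀ hWle hφ.aemeasurable hφ.2.1 hx
      (hsum x hx))
  calc c * ((1 - α) / (2 + 2 * ε)) * y ^ (-α) = c * y ^ (-α) * ((1 - α) / (2 + 2 * ε)) := by ring
    _ ≤ c * y ^ (-α) * ∫ z in Ioi 0, z ^ α * φ z := by
      gcongr
      exact hφ.le_integral_rpow_mul hν hα hα' hε hc hWle hWge
    _ ≤ betaW W φ y := mul_rpow_neg_le_betaW hc.le hWge hφ.2.1 hy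
      (integrableOn_mul_of_le_ratioPowSum hWm hW₀ hWle hφ.aemeasurable hφ.2.1 hy (hsum y hy))

end Kern

section Congr

variable {K K' W W' : ℝ → ℝ → ℝ} {φ : ℝ → ℝ} {ε x : ℝ}

lemma IsProfile.congr (hφ : IsProfile K φ) (hK : ∀ y z, 0 < y → 0 < z → K y z = K' y z) :
    IsProfile K' φ := by
  refine ⟨hφ.1, hφ.2.1, hφ.2.2.1, ?_⟩
  filter_upwards [hφ.2.2.2] with x hx
  rw [hx]
  refine setIntegral_congr_fun measurableSet_Ioo fun y hy =>
    setIntegral_congr_fun measurableSet_Ioi fun z hz => ?_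
  have hz₀ : 0 < z := (sub_pos.2 hy.2).trans hz
  simp only [hK y z hy.1 hz₀]

lemma Phi_congr (hW : ∀ y z, 0 < y → 0 < z → W y z = W' y z) (hx : 0 ≤ x) :
    Phi ε W φ x = Phi ε W' φ x := by
  have hβ (y : ℝ) (hy : 0 < y) : betaW W φ y = betaW W' φ y :=
    setIntegral_congr_fun measurableSet_Ioi fun z hz => by simp only [hW y z hy hz]
  rw [Phi, Phi]
  congr 1
  exact setIntegral_congr_fun measurableSet_Ioi fun y hy => by simp only [hβ y (hx.trans_lt hy)]

lemma exists_measurable_extension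
    (hW : Measurable ((Ioi 0 ×ˢ Ioi 0).domRestrict fun p : ℝ × ℝ => W p.1 p.2)) :
    ∃ W' : ℝ → ℝ → ℝ, Measurable (Function.uncurry W') ∧
      ∀ y z, 0 < y → 0 < z → W y z = W' y z := by
  obtain ⟨f, hf, hfW⟩ := (MeasurableEmbedding.subtype_coe
    (measurableSet_Ioi.prod measurableSet_Ioi)).exists_measurable_extend hW fun _ => ⟨0⟩
  exact ⟨Function.curry f, hf, fun y z hy hz => (congrFun hfW ⟨(y, z), hy, hz⟩).symm⟩

end Congr

theorem stmt17_general {α c εstar : ℝ} (hα : 0 < α) (hα' : α < 1) (hc : 0 < c)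
    (hεstar : 0 < εstar) {W : ℝ → ℝ → ℝ}
    (hWm : Measurable ((Ioi 0 ×ˢ Ioi 0).domRestrict fun p : ℝ × ℝ => W p.1 p.2))
    (hWle : ∀ x y : ℝ, 0 < x → 0 < y → W x y ≤ (x / y) ^ α + (y / x) ^ α)
    (hWge : ∀ x y : ℝ, 0 < x → 0 < y → c * ((x / y) ^ α + (y / x) ^ α) ≤ W x y) :
    ∃ cα > (0:ℝ), ∀ ε : ℝ, 0 < ε → ε ≤ εstar →
      ∀ φ : ℝ → ℝ, IsProfile (Kern ε W) φ → IsNormalised φ →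
        ∀ x : ℝ, 0 < x → x ≤ 1 → ∀ τ : ℝ, 0 < τ →
          (x ≤ τ → cα * ε * x ^ (-α) ≤ Phi ε W φ x - Phi ε W φ (x + τ)) ∧
          (τ ≤ x → cα * ε * x ^ (-1 - α) * τ ≤ Phi ε W φ x - Phi ε W φ (x + τ)) := by
  have : 0 < 1 - α := sub_pos.2 hα'
  obtain ⟨W', hW'm, hWW'⟩ := exists_measurable_extension hWm
  refine ⟨c * ((1 - α) / (2 + 2 * εstar)) * (exp (-2) / 4), by positivity,
    fun ε hε hεle φ hφ hnorm x hx hx₁ τ hτ => ?_⟩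
  have hφ' : IsProfile (Kern ε W') φ := hφ.congr fun y z hy hz => by rw [Kern, Kern, hWW' y z hy hz]
  have hdrop : c * ((1 - α) / (2 + 2 * εstar)) * (exp (-2) / 4) * ε * x ^ (-1 - α) * min τ x ≤
      Phi ε W φ x - Phi ε W φ (x + τ) := by
    rw [Phi_congr hWW' hx.le, Phi_congr hWW' (add_pos hx hτ).le]
    refine le_trans ?_ (hφ'.le_Phi_sub_Phi hnorm hα hα' hε hc hW'm
      (fun y z hy hz => hWW' y z hy hz ▸ hWle y z hy hz)
      (fun y z hy hz => hWW' y z hy hz ▸ hWge y z hy hz) hx hx₁ hτ)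
    gcongr
  refine ⟨fun hxτ => ?_, fun hτx => by rwa [min_eq_left hτx] at hdrop⟩
  rwa [min_eq_right hxτ, mul_assoc _ (x ^ _), ← rpow_add_one hx.ne',
    show -1 - α + 1 = -α by ring] at hdrop

theorem stmt17 (α : ℝ) (hα : α ∈ Ico (1/2 : ℝ) 1)
    (W : ℝ → ℝ → ℝ) (hW : GoodW α W)
    (cstar : ℝ) (hcstar : 0 < cstar)
    (hlow : ∀ x y : ℝ, 0 < x → 0 < y → cstar * ((x / y) ^ α + (y / x) ^ α) ≤ W x y) :
    ∃ εstar > (0:ℝ), ∃ cα > (0:ℝ), ∀ ε : ℝ, 0 < ε → ε ≤ εstar →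
      ∀ φ : ℝ → ℝ, IsProfile (Kern ε W) φ → IsNormalised φ →
        ∀ x : ℝ, 0 < x → x ≤ 1 → ∀ τ : ℝ, 0 < τ →
          (x ≤ τ → cα * ε * x ^ (-α) ≤ Phi ε W φ x - Phi ε W φ (x + τ)) ∧
          (τ ≤ x → cα * ε * x ^ (-1 - α) * τ ≤ Phi ε W φ x - Phi ε W φ (x + τ)) :=
  ⟨1, one_pos, stmt17_general (by linarith [hα.1]) hα.2 hcstar one_pos
    (continuousOn_iff_continuous_domRestrict.1 hW.1).measurable
    (fun x y hx hy => (hW.2.2.2 x y hx hy).2) hlow⟩
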